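/- Narcissistic-avaricious incentive guarantee: in any liquid democracy game, let p ∈ [0,1], and for each agent i let i* ∈ argmax_{j∈V} u_{ij}. Let z be the mixed profile in which each agent i votes herself with probability p and delegates to i* with probability 1−p. Then z is a (1 − p(1−p))-Nash equilibrium; in particular, u_i(z) ≥ p·u_{ii} + (1−p)·p·u_{i,i*} ≥ (1−p)·p·u_i(ẑ_i, z_{−i}) for every agent i and every mixed strategy ẑ_i. -/

import Mathlib

/-!
The utility of agent `i` is the average of `u i j` weighted by the probability that `j` is her
guru. She is her own guru whenever she votes, and by independence `j ≠ i` is her guru with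
probability at least (probability that `i` delegates to `j`) · (probability that `j` votes). For
the narcissistic-avaricious profile these weights are at least `p` and `(1 - p) * p`, which bounds
the utility from below, except that an agent with `istar i = i` votes with probability `1`, and then
`p + (1 - p) * p = 1 - (1 - p) ^ 2 ≤ 1`. Since guru probabilities sum to at most `1`, no mixed
profile whatsoever gives `i` more than `u i (istar i)`.
-/

open Finset

/-- The guru of agent `i` under pure profile `s` (where `s i = some j` means `i`
delegates to `j`, with `s i = some i` meaning `i` votes herself, and `s i = none`
meaning `i` abstains): follow delegation arcs for `n` steps; the endpoint is the
guru provided it votes itself. -/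
def guru {n : ℕ} (s : Fin n → Option (Fin n)) (i : Fin n) : Option (Fin n) :=
  ((fun o => Option.bind o s)^[n] (some i)).bind
    (fun j => if s j = some j then some j else none)

/-- Utility of agent `i` in the pure profile `s`: `u i (g i)` if the guru exists, else `0`. -/
def pureUtil {n : ℕ} (u : Fin n → Fin n → ℝ) (s : Fin n → Option (Fin n)) (i : Fin n) : ℝ :=
  (guru s i).elim 0 (u i)

/-- A mixed strategy for a single agent: nonnegative, total probability at most one
(the residual probability is abstention). -/
def IsStrat {n : ℕ} (y : Fin n → ℝ) : Prop := (∀ j, 0 ≤ y j) ∧ (∑ j, y j) ≤ 1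

/-- A mixed strategy profile. -/
def IsMixed {n : ℕ} (x : Fin n → Fin n → ℝ) : Prop := ∀ i, IsStrat (x i)

/-- Probability that the independent randomization `x` produces the pure profile `s`. -/
def prob {n : ℕ} (x : Fin n → Fin n → ℝ) (s : Fin n → Option (Fin n)) : ℝ :=
  ∏ i, (s i).elim (1 - ∑ j, x i j) (x i)

/-- Expected utility of agent `i` under the mixed profile `x`. -/
def util {n : ℕ} (u x : Fin n → Fin n → ℝ) (i : Fin n) : ℝ :=
  ∑ s : Fin n → Option (Fin n), prob x s * pureUtil u s i

/-- Expected social welfare of the mixed profile `x`. -/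
def SW {n : ℕ} (u x : Fin n → Fin n → ℝ) : ℝ := ∑ i, util u x i

/-- The set of social-welfare values achievable by mixed profiles; `OPT` is its greatest element. -/
def SWvals {n : ℕ} (u : Fin n → Fin n → ℝ) : Set ℝ :=
  {w | ∃ x, IsMixed x ∧ w = SW u x}

/-- `x` is an `ε`-Nash equilibrium. -/
def EpsNash {n : ℕ} (u : Fin n → Fin n → ℝ) (ε : ℝ) (x : Fin n → Fin n → ℝ) : Prop :=
  ∀ i y, IsStrat y → util u x i ≥ (1 - ε) * util u (Function.update x i y) i

/-- `x` is an (exact, mixed) Nash equilibrium. -/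
def NashEq {n : ℕ} (u x : Fin n → Fin n → ℝ) : Prop :=
  ∀ i y, IsStrat y → util u x i ≥ util u (Function.update x i y) i

/-- The narcissistic-avaricious profile: each agent i votes herself with
probability p and delegates to istar i with probability 1 - p. -/
def nazProfile {n : ℕ} (p : ℝ) (istar : Fin n → Fin n) : Fin n → Fin n → ℝ :=
  fun i j => (if j = i then p else 0) + (if j = istar i then 1 - p else 0)

section Probabilities

variable {n : ℕ} {x : Fin n → Fin n → ℝ}

/-- The probability that agent `k` makes the choice `o` under the mixed profile `x`, where `none`
is abstention. -/
def choiceProb (x : Fin n → Fin n → ℝ) (k : Fin n) (o : Option (Fin n)) : ℝ :=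
  o.elim (1 - ∑ j, x k j) (x k)

lemma sum_choiceProb (x : Fin n → Fin n → ℝ) (k : Fin n) : ∑ o, choiceProb x k o = 1 := by
  simp [choiceProb]

lemma IsMixed.choiceProb_nonneg (hx : IsMixed x) (k : Fin n) :
    ∀ o, 0 ≤ choiceProb x k o
  | none => sub_nonneg.2 (hx k).2
  | some j => (hx k).1 j

lemma IsMixed.prob_nonneg (hx : IsMixed x) (s : Fin n → Option (Fin n)) : 0 ≤ prob x s :=
  prod_nonneg fun k _ => hx.choiceProb_nonneg k (s k)

lemma IsMixed.update (hx : IsMixed x) {y : Fin n → ℝ} (hy : IsStrat y) (i : Fin n) :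
    IsMixed (Function.update x i y) :=
  (Function.forall_update_iff x fun _ => IsStrat).2 ⟨hy, fun k _ => hx k⟩

lemma sum_prob_filter_forall_mem (x : Fin n → Fin n → ℝ) (T : Finset (Fin n))
    (a : Fin n → Option (Fin n)) :
    ∑ s with ∀ k ∈ T, s k = a k, prob x s = ∏ k ∈ T, choiceProb x k (a k) := by
  let C : Fin n → Finset (Option (Fin n)) := fun k => if k ∈ T then {a k} else univ
  have event_eq : ({s | ∀ k ∈ T, s k = a k} : Finset (Fin n → Option (Fin n))) =
      Fintype.piFinset C := by
    ext s
    simp only [mem_filter_univ, Fintype.mem_piFinset, C]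
    refine forall_congr' fun k => ?_
    split_ifs with hk <;> simp [hk]
  have factor_eq (k : Fin n) :
      ∑ o ∈ C k, choiceProb x k o = if k ∈ T then choiceProb x k (a k) else 1 := by
    by_cases hk : k ∈ T
    · simp [C, hk]
    · simpa [C, hk] using sum_choiceProb x k
  calc ∑ s with ∀ k ∈ T, s k = a k, prob x s
      = ∏ k, ∑ o ∈ C k, choiceProb x k o := by rw [event_eq, prod_univ_sum]; rfl
    _ = ∏ k ∈ T, choiceProb x k (a k) := by simp only [factor_eq, Fintype.prod_ite_mem]

lemma sum_prob (x : Fin n → Fin n → ℝ) : ∑ s, prob x s = 1 := by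
  simpa using sum_prob_filter_forall_mem x ∅ fun _ => none

end Probabilities

section GuruProb

variable {n : ℕ} {u x : Fin n → Fin n → ℝ} {i j : Fin n}

lemma guru_eq_some_of_delegate {s : Fin n → Option (Fin n)} (hi : s i = some j)
    (hj : s j = some j) : guru s i = some j := by
  obtain ⟨m, rfl⟩ := Nat.exists_eq_add_one.2 i.pos
  have walk_eq : (fun o => Option.bind o s)^[m] (some j) = some j :=
    Function.iterate_fixed hj m
  simp [guru, hi, walk_eq, hj]

/-- The probability that `j` is the guru of `i` under the mixed profile `x`. -/
def guruProb (x : Fin n → Fin n → ℝ) (i j : Fin n) : ℝ :=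
  ∑ s with guru s i = some j, prob x s

lemma IsMixed.guruProb_nonneg (hx : IsMixed x) (i j : Fin n) : 0 ≤ guruProb x i j :=
  sum_nonneg fun s _ => hx.prob_nonneg s

lemma IsMixed.sum_guruProb_le_one (hx : IsMixed x) (i : Fin n) : ∑ j, guruProb x i j ≤ 1 := by
  have no_guru_nonneg : 0 ≤ ∑ s with guru s i = none, prob x s :=
    sum_nonneg fun s _ => hx.prob_nonneg s
  calc ∑ j, guruProb x i j
      ≤ (∑ s with guru s i = none, prob x s) + ∑ j, guruProb x i j :=
        le_add_of_nonneg_left no_guru_nonneg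
    _ = ∑ o, ∑ s with guru s i = o, prob x s := by rw [Fintype.sum_option]; rfl
    _ = 1 := by rw [sum_fiberwise, sum_prob]

lemma util_eq_sum_guruProb_mul (u x : Fin n → Fin n → ℝ) (i : Fin n) :
    util u x i = ∑ j, guruProb x i j * u i j := by
  have fiber_eq (o : Option (Fin n)) : ∑ s with guru s i = o, prob x s * pureUtil u s i =
      (∑ s with guru s i = o, prob x s) * o.elim 0 (u i) := by
    rw [sum_mul]
    refine sum_congr rfl fun s hs => ?_
    rw [pureUtil, (mem_filter.1 hs).2]
  rw [util, ← sum_fiberwise univ (guru · i), Fintype.sum_option]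
  simp [fiber_eq, guruProb]

lemma IsMixed.prod_choiceProb_le_guruProb (hx : IsMixed x) {T : Finset (Fin n)}
    {a : Fin n → Option (Fin n)} (h : ∀ s, (∀ k ∈ T, s k = a k) → guru s i = some j) :
    ∏ k ∈ T, choiceProb x k (a k) ≤ guruProb x i j := by
  rw [← sum_prob_filter_forall_mem]
  exact sum_le_sum_of_subset_of_nonneg (monotone_filter_right _ fun s _ => h s)
    fun s _ _ => hx.prob_nonneg s

lemma IsMixed.vote_le_guruProb (hx : IsMixed x) (i : Fin n) : x i i ≤ guruProb x i i := by
  simpa [choiceProb] using hx.prod_choiceProb_le_guruProb (T := {i}) (a := fun _ => some i)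
    fun s hs => guru_eq_some_of_delegate (hs i (mem_singleton_self i)) (hs i (mem_singleton_self i))

lemma IsMixed.delegate_mul_vote_le_guruProb (hx : IsMixed x) (hij : i ≠ j) :
    x i j * x j j ≤ guruProb x i j := by
  simpa [choiceProb, prod_pair hij] using
    hx.prod_choiceProb_le_guruProb (T := {i, j}) (a := fun _ => some j)
      fun s hs => guru_eq_some_of_delegate (hs i (by simp)) (hs j (by simp))

lemma IsMixed.util_le (hx : IsMixed x) {M : ℝ} (hM : 0 ≤ M) (hu : ∀ j, u i j ≤ M) :
    util u x i ≤ M :=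
  calc util u x i = ∑ j, guruProb x i j * u i j := util_eq_sum_guruProb_mul u x i
    _ ≤ ∑ j, guruProb x i j * M :=
        sum_le_sum fun j _ => mul_le_mul_of_nonneg_left (hu j) (hx.guruProb_nonneg i j)
    _ = (∑ j, guruProb x i j) * M := (sum_mul ..).symm
    _ ≤ M := mul_le_of_le_one_left hM (hx.sum_guruProb_le_one i)

lemma IsMixed.sum_guruProb_mul_le_util (hx : IsMixed x) (hu : ∀ j, 0 ≤ u i j)
    (T : Finset (Fin n)) : ∑ j ∈ T, guruProb x i j * u i j ≤ util u x i := by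
  rw [util_eq_sum_guruProb_mul]
  exact sum_le_univ_sum_of_nonneg fun j => mul_nonneg (hx.guruProb_nonneg i j) (hu j)

lemma IsMixed.vote_mul_le_util (hx : IsMixed x) (hu : ∀ j, 0 ≤ u i j) :
    x i i * u i i ≤ util u x i :=
  calc x i i * u i i ≤ guruProb x i i * u i i :=
        mul_le_mul_of_nonneg_right (hx.vote_le_guruProb i) (hu i)
    _ ≤ util u x i := by simpa using hx.sum_guruProb_mul_le_util hu {i}

lemma IsMixed.vote_mul_add_delegate_mul_le_util (hx : IsMixed x) (hu : ∀ j, 0 ≤ u i j)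
    (hij : i ≠ j) : x i i * u i i + x i j * x j j * u i j ≤ util u x i :=
  calc x i i * u i i + x i j * x j j * u i j
      ≤ guruProb x i i * u i i + guruProb x i j * u i j :=
        add_le_add (mul_le_mul_of_nonneg_right (hx.vote_le_guruProb i) (hu i))
          (mul_le_mul_of_nonneg_right (hx.delegate_mul_vote_le_guruProb hij) (hu j))
    _ ≤ util u x i := by simpa [sum_pair hij] using hx.sum_guruProb_mul_le_util hu {i, j}

end GuruProb

section NazProfile

variable {n : ℕ} {u : Fin n → Fin n → ℝ} {p : ℝ} {istar : Fin n → Fin n} {i : Fin n}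

lemma isMixed_nazProfile (hp : p ∈ Set.Icc (0 : ℝ) 1) (istar : Fin n → Fin n) :
    IsMixed (nazProfile p istar) := fun i =>
  ⟨fun j => add_nonneg (ite_nonneg hp.1 le_rfl) (ite_nonneg (sub_nonneg.2 hp.2) le_rfl),
    by simp [nazProfile, sum_add_distrib]⟩

lemma nazProfile_self_of_eq (p : ℝ) (hi : istar i = i) : nazProfile p istar i i = 1 := by
  simp [nazProfile, hi]

lemma nazProfile_istar_of_ne (p : ℝ) (hi : istar i ≠ i) :
    nazProfile p istar i (istar i) = 1 - p := by
  simp [nazProfile, hi]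

lemma le_nazProfile_self (hp : p ≤ 1) (istar : Fin n → Fin n) (i : Fin n) :
    p ≤ nazProfile p istar i i := by
  simpa [nazProfile] using ite_nonneg (sub_nonneg.2 hp) le_rfl

lemma le_util_nazProfile (hu : ∀ j, 0 ≤ u i j) (hp : p ∈ Set.Icc (0 : ℝ) 1)
    (istar : Fin n → Fin n) :
    p * u i i + (1 - p) * p * u i (istar i) ≤ util u (nazProfile p istar) i := by
  have hz := isMixed_nazProfile hp istar
  by_cases hi : istar i = i
  · calc p * u i i + (1 - p) * p * u i (istar i)
        = (1 - (1 - p) ^ 2) * u i i := by rw [hi]; ring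
      _ ≤ nazProfile p istar i i * u i i := by
          rw [nazProfile_self_of_eq p hi]
          exact mul_le_mul_of_nonneg_right (sub_le_self 1 (sq_nonneg (1 - p))) (hu i)
      _ ≤ util u (nazProfile p istar) i := hz.vote_mul_le_util hu
  · calc p * u i i + (1 - p) * p * u i (istar i)
        ≤ nazProfile p istar i i * u i i +
          nazProfile p istar i (istar i) * nazProfile p istar (istar i) (istar i) *
            u i (istar i) := by
          rw [nazProfile_istar_of_ne p hi]
          have hp1 : 0 ≤ 1 - p := sub_nonneg.2 hp.2
          gcongr
          exacts [hu i, le_nazProfile_self hp.2 istar i, hu (istar i),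
            le_nazProfile_self hp.2 istar (istar i)]
      _ ≤ util u (nazProfile p istar) i :=
          hz.vote_mul_add_delegate_mul_le_util hu (Ne.symm hi)

end NazProfile

theorem stmt15_general {n : ℕ} (u : Fin n → Fin n → ℝ) (hu : ∀ i j, 0 ≤ u i j)
    (p : ℝ) (hp : p ∈ Set.Icc (0 : ℝ) 1)
    (istar : Fin n → Fin n) (histar : ∀ i j, u i j ≤ u i (istar i)) :
    EpsNash u (1 - p * (1 - p)) (nazProfile p istar) ∧
    ∀ i, p * u i i + (1 - p) * p * u i (istar i) ≤ util u (nazProfile p istar) i ∧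
      ∀ x, IsMixed x →
        (1 - p) * p * util u x i ≤ p * u i i + (1 - p) * p * u i (istar i) := by
  have hz := isMixed_nazProfile hp istar
  have lower (i : Fin n) := le_util_nazProfile (hu i) hp istar
  have upper (i : Fin n) (x : Fin n → Fin n → ℝ) (hx : IsMixed x) :
      (1 - p) * p * util u x i ≤ p * u i i + (1 - p) * p * u i (istar i) :=
    calc (1 - p) * p * util u x i
        ≤ (1 - p) * p * u i (istar i) :=
          mul_le_mul_of_nonneg_left (hx.util_le (hu i (istar i)) (histar i))
            (mul_nonneg (sub_nonneg.2 hp.2) hp.1)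
      _ ≤ p * u i i + (1 - p) * p * u i (istar i) :=
          le_add_of_nonneg_left (mul_nonneg hp.1 (hu i i))
  refine ⟨fun i y hy => ?_, fun i => ⟨lower i, upper i⟩⟩
  rw [sub_sub_cancel, mul_comm p]
  exact (upper i _ (hz.update hy i)).trans (lower i)

/-- Narcissistic-avaricious incentive guarantee: z is a (1 - p(1-p))-Nash
equilibrium, and u_i(z) ≥ p·u_ii + (1-p)·p·u_{i,i*} ≥ (1-p)·p·u_i(ẑ_i, z₋ᵢ)
for every agent i and mixed strategy ẑᵢ. -/
theorem stmt15 {n : ℕ} (u : Fin n → Fin n → ℝ) (hu : ∀ i j, 0 ≤ u i j ∧ u i j ≤ 1)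
    (p : ℝ) (hp : p ∈ Set.Icc (0:ℝ) 1)
    (istar : Fin n → Fin n) (histar : ∀ i j, u i j ≤ u i (istar i)) :
    EpsNash u (1 - p*(1-p)) (nazProfile p istar) ∧
    ∀ i, p * u i i + (1-p) * p * u i (istar i) ≤ util u (nazProfile p istar) i ∧
      ∀ y : Fin n → ℝ, IsStrat y →
        (1-p) * p * util u (Function.update (nazProfile p istar) i y) i ≤
          p * u i i + (1-p) * p * u i (istar i) := by
  obtain ⟨nash, bounds⟩ := stmt15_general u (fun i j => (hu i j).1) p hp istar histar
  exact ⟨nash, fun i => (bounds i).imp_right fun h _ hy =>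
    h _ ((isMixed_nazProfile hp istar).update hy i)⟩
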